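/- There exists a constant C > 0 such that for every R ≥ 0 and every φ ∈ H²(ℝ², ℂ), the function v'φ := −2i (K_R ∗ |φ|²) · ∇φ − (K_R ∗ J[φ]) φ satisfies ‖v'φ‖₂ ≤ C ( ‖φ‖_{H¹}³ + ‖φ‖_{H²} ‖φ‖_{H¹}² ). -/

import Mathlib

noncomputable section
open MeasureTheory ENNReal
open scoped RealInnerProductSpace

/-- The plane `ℝ²`. -/
abbrev E2 : Type := EuclideanSpace ℝ (Fin 2)

/-- The rotation by 90 degrees: `x^⊥ = (-x₂, x₁)`. -/
def perp (x : E2) : E2 := (WithLp.equiv 2 (Fin 2 → ℝ)).symm ![-(x 1), x 0]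

/-- The Aharonov–Bohm kernel `K_R(x) = x^⊥ / (max R ‖x‖)²` (with `K_R 0 = 0`,
also when `R = 0`, by the junk-value convention `(0 : ℝ)⁻¹ = 0`). -/
def K (R : ℝ) (x : E2) : E2 := ((max R ‖x‖) ^ 2)⁻¹ • perp x

/-- The standard basis of `ℝ²`. -/
def e2 (j : Fin 2) : E2 := EuclideanSpace.single j 1

/-- Componentwise convolution of the vector kernel `K_R` with a scalar density. -/
def convKs (R : ℝ) (ρ : E2 → ℝ) (x : E2) : E2 := ∫ y, ρ y • K R (x - y)

/-- Convolution of the vector kernel `K_R` with a vector field, summed over components. -/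
def convKv (R : ℝ) (F : E2 → E2) (x : E2) : ℝ := ∫ y, ⟪K R (x - y), F y⟫

/-- The current `J[u] = i(u∇ū - ū∇u) = 2 Im(ū ∇u)`, an `ℝ²`-valued function. -/
def Jf (u : E2 → ℂ) (x : E2) : E2 :=
  (WithLp.equiv 2 (Fin 2 → ℝ)).symm fun j =>
    2 * ((starRingEnd ℂ) (u x) * fderiv ℝ u x (e2 j)).im

/-- The `H¹` norm `(‖u‖₂² + ‖∇u‖₂²)^{1/2}` (extended-real valued). -/
def H1 (u : E2 → ℂ) : ℝ≥0∞ :=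
  (eLpNorm u 2 volume ^ 2 + eLpNorm (fun x => fderiv ℝ u x) 2 volume ^ 2) ^ (1 / 2 : ℝ)

/-- The `H²` norm `(‖u‖₂² + ‖∇u‖₂² + ‖∇²u‖₂²)^{1/2}` (extended-real valued). -/
def H2 (u : E2 → ℂ) : ℝ≥0∞ :=
  (eLpNorm u 2 volume ^ 2 + eLpNorm (fun x => fderiv ℝ u x) 2 volume ^ 2
    + eLpNorm (fun x => fderiv ℝ (fderiv ℝ u) x) 2 volume ^ 2) ^ (1 / 2 : ℝ)

/-!
Along each ray from the origin a decaying function is bounded by the integral of its derivative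
beyond the point. Integrating in polar coordinates gives the `L¹` Hardy inequality
`(d - 1) ∫ ‖F x‖ / ‖x‖ ≤ ∫ ‖DF‖` in dimension `d`, whose right-hand side is translation invariant.
Since `‖K_R z‖ ≤ ‖z‖⁻¹`, the inequality for `F = |φ|²` and for `F = φ Dφ`, together with the
Cauchy–Schwarz inequality, bounds `K_R ∗ |φ|²` by `‖φ‖_{H¹}²` and `K_R ∗ J[φ]` by
`‖φ‖_{H¹}² + ‖φ‖_{H¹} ‖φ‖_{H²}`, uniformly in space and in `R`.
-/

open Set Filter Topology Module

section Lp

variable {α F G H : Type*} {_ : MeasurableSpace α} {μ : Measure α} [NormedAddCommGroup F]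
  [NormedAddCommGroup G] [NormedAddCommGroup H] {g : α → G} {h : α → H}

theorem lintegral_enorm_mul_enorm_le_eLpNorm_mul_eLpNorm (hg : AEStronglyMeasurable g μ)
    (hh : AEStronglyMeasurable h μ) :
    ∫⁻ x, ‖g x‖ₑ * ‖h x‖ₑ ∂μ ≤ eLpNorm g 2 μ * eLpNorm h 2 μ := by
  simpa [eLpNorm_one_eq_lintegral_enorm, enorm_mul] using
    eLpNorm_smul_le_mul_eLpNorm (r := 1) hh.norm hg.norm

theorem eLpNorm_le_mul_add_mul_of_enorm_le {f : α → F} {a b p : ℝ≥0∞} (hp : 1 ≤ p)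
    (hg : AEStronglyMeasurable g μ) (hh : AEStronglyMeasurable h μ)
    (hf : ∀ x, ‖f x‖ₑ ≤ a * ‖g x‖ₑ + b * ‖h x‖ₑ) :
    eLpNorm f p μ ≤ a * eLpNorm g p μ + b * eLpNorm h p μ := by
  have hga : AEStronglyMeasurable (fun x ↦ a * ‖g x‖ₑ) μ :=
    (hg.enorm.const_mul a).aestronglyMeasurable
  have hhb : AEStronglyMeasurable (fun x ↦ b * ‖h x‖ₑ) μ :=
    (hh.enorm.const_mul b).aestronglyMeasurable
  calc eLpNorm f p μ
    _ ≤ eLpNorm ((fun x ↦ a * ‖g x‖ₑ) + fun x ↦ b * ‖h x‖ₑ) p μ := eLpNorm_mono_enorm hf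
    _ ≤ eLpNorm (fun x ↦ a * ‖g x‖ₑ) p μ + eLpNorm (fun x ↦ b * ‖h x‖ₑ) p μ :=
        eLpNorm_add_le hga hhb hp
    _ ≤ a * eLpNorm g p μ + b * eLpNorm h p μ := by
        gcongr
        · exact eLpNorm_le_mul_eLpNorm_of_ae_le_mul'' p hg (.of_forall fun _ ↦ le_rfl)
        · exact eLpNorm_le_mul_eLpNorm_of_ae_le_mul'' p hh (.of_forall fun _ ↦ le_rfl)

end Lp

section HalfLine

variable {G : Type*} [NormedAddCommGroup G] [NormedSpace ℝ G] {g : ℝ → G}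

theorem enorm_le_lintegral_Ioi_enorm_deriv (hg : ContDiff ℝ 1 g) {a : ℝ}
    (hga : IntegrableOn g (Ioi a)) (r : ℝ) : ‖g r‖ₑ ≤ ∫⁻ s in Ioi r, ‖deriv g s‖ₑ := by
  by_cases htop : ∫⁻ s in Ioi r, ‖deriv g s‖ₑ = ∞
  · exact htop ▸ le_top
  have hderiv : IntegrableOn (deriv g) (Ioi r) :=
    ⟨(hg.continuous_deriv le_rfl).aestronglyMeasurable, lt_top_iff_ne_top.2 htop⟩
  have hlim : Tendsto g atTop (𝓝 0) :=
    tendsto_zero_of_hasDerivAt_of_integrableOn_Ioi (a := max a r)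
      (fun s _ ↦ (hg.differentiable one_ne_zero s).hasDerivAt)
      (hderiv.mono_set (Ioi_subset_Ioi (le_max_right _ _)))
      (hga.mono_set (Ioi_subset_Ioi (le_max_left _ _)))
  have hbound : ∀ᶠ s in atTop, ‖g r‖ₑ ≤ (∫⁻ t in Ioi r, ‖deriv g t‖ₑ) + ‖g s‖ₑ := by
    filter_upwards [eventually_ge_atTop r] with s hrs
    calc ‖g r‖ₑ = ‖g s - (g s - g r)‖ₑ := by rw [_root_.sub_sub_cancel]
      _ ≤ ‖g s - g r‖ₑ + ‖g s‖ₑ := enorm_sub_le.trans_eq (add_comm _ _)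
      _ ≤ (∫⁻ t in Icc r s, ‖deriv g t‖ₑ) + ‖g s‖ₑ := by
          gcongr
          exact enorm_sub_le_lintegral_deriv_of_contDiffOn_Icc hg.contDiffOn hrs
      _ ≤ (∫⁻ t in Ioi r, ‖deriv g t‖ₑ) + ‖g s‖ₑ := by
          rw [← setLIntegral_congr Ioc_ae_eq_Icc]
          gcongr
          exact Ioc_subset_Ioi_self
  simpa using ge_of_tendsto (tendsto_const_nhds.add hlim.enorm) hbound

/-- For the measure `ν` with density `‖g'‖`, the bound `‖g r‖ ≤ ν (r, ∞)` turns the left-hand side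
into the layer-cake formula for `∫ s ^ p ∂ν`. -/
theorem ofReal_mul_lintegral_Ioi_enorm_mul_rpow_sub_one_le (hg : ContDiff ℝ 1 g) {a : ℝ}
    (hga : IntegrableOn g (Ioi a)) {p : ℝ} (hp : 0 < p) :
    ENNReal.ofReal p * ∫⁻ r in Ioi 0, ‖g r‖ₑ * ENNReal.ofReal (r ^ (p - 1)) ≤
      ∫⁻ s in Ioi 0, ‖deriv g s‖ₑ * ENNReal.ofReal (s ^ p) := by
  set ν : Measure ℝ := (volume.restrict (Ioi 0)).withDensity fun s ↦ ‖deriv g s‖ₑ with hν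
  have hmeas : Measurable fun s ↦ ‖deriv g s‖ₑ := (hg.continuous_deriv le_rfl).enorm.measurable
  have hν_tail : ∀ r ∈ Ioi (0 : ℝ), ‖g r‖ₑ ≤ ν {s | r < s} := fun r (hr : 0 < r) ↦ by
    change _ ≤ ν (Ioi r)
    rw [hν, withDensity_apply _ measurableSet_Ioi, Measure.restrict_restrict measurableSet_Ioi,
      inter_eq_left.2 (Ioi_subset_Ioi hr.le)]
    exact enorm_le_lintegral_Ioi_enorm_deriv hg hga r
  have hν_nonneg : 0 ≤ᵐ[ν] (id : ℝ → ℝ) :=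
    (withDensity_absolutelyContinuous _ _).ae_le <|
      (ae_restrict_mem measurableSet_Ioi).mono fun _ hs ↦ le_of_lt hs
  calc ENNReal.ofReal p * ∫⁻ r in Ioi 0, ‖g r‖ₑ * ENNReal.ofReal (r ^ (p - 1))
    _ ≤ ENNReal.ofReal p * ∫⁻ r in Ioi 0, ν {s | r < id s} * ENNReal.ofReal (r ^ (p - 1)) :=
        mul_le_mul_right (setLIntegral_mono' measurableSet_Ioi
          fun r hr ↦ mul_le_mul_left (hν_tail r hr) _) _
    _ = ∫⁻ s, ENNReal.ofReal (id s ^ p) ∂ν :=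
        (lintegral_rpow_eq_lintegral_meas_lt_mul ν hν_nonneg aemeasurable_id hp).symm
    _ = ∫⁻ s in Ioi 0, ‖deriv g s‖ₑ * ENNReal.ofReal (s ^ p) :=
        lintegral_withDensity_eq_lintegral_mul _ hmeas (by fun_prop)

theorem natCast_mul_lintegral_Ioi_enorm_div_enorm_le_of_norm_eq_one {E : Type*}
    [NormedAddCommGroup E] [NormedSpace ℝ E] {F : E → G} (hF : ContDiff ℝ 1 F) {v : E}
    (hv : ‖v‖ = 1) {a : ℝ} (hFv : IntegrableOn (fun r : ℝ ↦ F (r • v)) (Ioi a)) {n : ℕ}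
    (hn : 0 < n) :
    n * ∫⁻ r in Ioi (0 : ℝ), ‖F (r • v)‖ₑ / ‖r • v‖ₑ * ENNReal.ofReal (r ^ n) ≤
      ∫⁻ r in Ioi (0 : ℝ), ‖fderiv ℝ F (r • v)‖ₑ * ENNReal.ofReal (r ^ n) := by
  set g : ℝ → G := fun r ↦ F (r • v)
  have hderiv (r : ℝ) : ‖deriv g r‖ₑ ≤ ‖fderiv ℝ F (r • v)‖ₑ := by
    have hcomp : HasDerivAt g (fderiv ℝ F (r • v) v) r :=
      (hF.differentiable one_ne_zero _).hasFDerivAt.comp_hasDerivAt r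
        (by simpa using (hasDerivAt_id r).smul_const v)
    rw [hcomp.deriv, enorm_le_iff_norm_le]
    simpa [hv] using (fderiv ℝ F (r • v)).le_opNorm v
  have hweight {r : ℝ} (hr : 0 < r) : ‖g r‖ₑ / ‖r • v‖ₑ * ENNReal.ofReal (r ^ n) =
      ‖g r‖ₑ * ENNReal.ofReal (r ^ ((n : ℝ) - 1)) := by
    rw [← ofReal_norm (r • v), norm_smul, hv, mul_one, Real.norm_of_nonneg hr.le,
      Real.rpow_sub_one hr.ne', Real.rpow_natCast, ENNReal.ofReal_div_of_pos hr,
      div_eq_mul_inv, div_eq_mul_inv, mul_assoc, mul_comm (ENNReal.ofReal r)⁻¹]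
  calc (n : ℝ≥0∞) * ∫⁻ r in Ioi (0 : ℝ), ‖g r‖ₑ / ‖r • v‖ₑ * ENNReal.ofReal (r ^ n)
    _ = ENNReal.ofReal n * ∫⁻ r in Ioi 0, ‖g r‖ₑ * ENNReal.ofReal (r ^ ((n : ℝ) - 1)) := by
        rw [ENNReal.ofReal_natCast, setLIntegral_congr_fun measurableSet_Ioi fun r hr ↦ hweight hr]
    _ ≤ ∫⁻ r in Ioi 0, ‖deriv g r‖ₑ * ENNReal.ofReal (r ^ (n : ℝ)) :=
        ofReal_mul_lintegral_Ioi_enorm_mul_rpow_sub_one_le (hF.comp (by fun_prop)) hFv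
          (Nat.cast_pos.2 hn)
    _ ≤ ∫⁻ r in Ioi 0, ‖fderiv ℝ F (r • v)‖ₑ * ENNReal.ofReal (r ^ n) := by
        simp only [Real.rpow_natCast]
        gcongr with r
        exact hderiv r

end HalfLine

section Polar

theorem lintegral_volumeIoiPow (n : ℕ) {f : ℝ → ℝ≥0∞} (hf : Measurable f) :
    ∫⁻ r : Ioi (0 : ℝ), f r ∂.volumeIoiPow n = ∫⁻ r in Ioi 0, f r * ENNReal.ofReal (r ^ n) := by
  rw [Measure.volumeIoiPow, lintegral_withDensity_eq_lintegral_mul _ (by fun_prop) (by fun_prop),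
    ← lintegral_subtype_comap measurableSet_Ioi]
  simp only [Pi.mul_apply, mul_comm]

variable {E : Type*} [NormedAddCommGroup E] [NormedSpace ℝ E] [FiniteDimensional ℝ E]
  [MeasurableSpace E] [BorelSpace E] (μ : Measure E) [μ.IsAddHaarMeasure]

theorem lintegral_prod_toSphere_volumeIoiPow {f : E → ℝ≥0∞} (hf : Measurable f) :
    ∫⁻ p, f ((p.2 : ℝ) • (p.1 : E)) ∂μ.toSphere.prod (.volumeIoiPow (finrank ℝ E - 1)) =
      ∫⁻ x in {0}ᶜ, f x ∂μ := by
  rw [← (μ.measurePreserving_homeomorphUnitSphereProd).lintegral_comp (by fun_prop),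
    ← lintegral_subtype_comap (measurableSet_singleton _).compl]
  refine lintegral_congr fun x ↦ congrArg f ?_
  exact congrArg Subtype.val ((homeomorphUnitSphereProd E).symm_apply_apply x)

theorem lintegral_eq_lintegral_toSphere_lintegral_Ioi [Nontrivial E] {f : E → ℝ≥0∞}
    (hf : Measurable f) :
    ∫⁻ x, f x ∂μ = ∫⁻ ω : Metric.sphere (0 : E) 1,
      (∫⁻ r in Ioi (0 : ℝ), f (r • (ω : E)) * ENNReal.ofReal (r ^ (finrank ℝ E - 1)))
      ∂μ.toSphere := by
  calc ∫⁻ x, f x ∂μ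
    _ = ∫⁻ x in {0}ᶜ, f x ∂μ := by rw [restrict_compl_singleton]
    _ = ∫⁻ p, f ((p.2 : ℝ) • (p.1 : E)) ∂μ.toSphere.prod (.volumeIoiPow (finrank ℝ E - 1)) :=
        (lintegral_prod_toSphere_volumeIoiPow μ hf).symm
    _ = _ := by
        rw [lintegral_prod _ (by fun_prop)]
        exact lintegral_congr fun ω ↦
          lintegral_volumeIoiPow _ (f := fun r : ℝ ↦ f (r • (ω : E))) (by fun_prop)

theorem ae_integrableOn_Ioi_one_comp_smul [Nontrivial E] {G : Type*} [NormedAddCommGroup G]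
    {F : E → G} (hF : Continuous F) (hFi : Integrable F μ) :
    ∀ᵐ ω : Metric.sphere (0 : E) 1 ∂μ.toSphere,
      IntegrableOn (fun r : ℝ ↦ F (r • (ω : E))) (Ioi 1) := by
  have hpolar := lintegral_eq_lintegral_toSphere_lintegral_Ioi μ hF.enorm.measurable
  have hmeas : Measurable fun p : Metric.sphere (0 : E) 1 × ℝ ↦
      ‖F (p.2 • (p.1 : E))‖ₑ * ENNReal.ofReal (p.2 ^ (finrank ℝ E - 1)) :=
    (hF.comp (by fun_prop)).enorm.measurable.mul (by fun_prop)
  filter_upwards [ae_lt_top hmeas.lintegral_prod_right' (hpolar ▸ hFi.2.ne)] with ω hω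
  refine ⟨(hF.comp (by fun_prop)).aestronglyMeasurable, lt_of_le_of_lt ?_ hω⟩
  calc ∫⁻ r in Ioi (1 : ℝ), ‖F (r • (ω : E))‖ₑ
    _ ≤ ∫⁻ r in Ioi (1 : ℝ), ‖F (r • (ω : E))‖ₑ * ENNReal.ofReal (r ^ (finrank ℝ E - 1)) := by
        refine setLIntegral_mono' measurableSet_Ioi fun r hr ↦ le_mul_of_one_le_right' ?_
        exact ENNReal.one_le_ofReal.2 (one_le_pow₀ (le_of_lt hr))
    _ ≤ _ := lintegral_mono_set (Ioi_subset_Ioi zero_le_one)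

end Polar

theorem enorm_fderiv_smul_le {𝕜 𝕜' E G : Type*} [NontriviallyNormedField 𝕜] [NormedField 𝕜']
    [NormedAlgebra 𝕜 𝕜'] [NormedAddCommGroup E] [NormedSpace 𝕜 E] [NormedAddCommGroup G]
    [NormedSpace 𝕜 G] [NormedSpace 𝕜' G] [IsScalarTower 𝕜 𝕜' G] {u : E → 𝕜'} {v : E → G} {x : E}
    (hu : DifferentiableAt 𝕜 u x) (hv : DifferentiableAt 𝕜 v x) :
    ‖fderiv 𝕜 (u • v) x‖ₑ ≤ ‖u x‖ₑ * ‖fderiv 𝕜 v x‖ₑ + ‖fderiv 𝕜 u x‖ₑ * ‖v x‖ₑ := by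
  refine ContinuousLinearMap.opENorm_le_bound _ fun w ↦ ?_
  calc ‖fderiv 𝕜 (u • v) x w‖ₑ
    _ = ‖u x • fderiv 𝕜 v x w + fderiv 𝕜 u x w • v x‖ₑ := by rw [fderiv_smul hu hv]; rfl
    _ ≤ ‖u x‖ₑ * ‖fderiv 𝕜 v x w‖ₑ + ‖fderiv 𝕜 u x w‖ₑ * ‖v x‖ₑ := by
        grw [enorm_add_le, enorm_smul, enorm_smul]
    _ ≤ ‖u x‖ₑ * (‖fderiv 𝕜 v x‖ₑ * ‖w‖ₑ) + ‖fderiv 𝕜 u x‖ₑ * ‖w‖ₑ * ‖v x‖ₑ := by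
        grw [(fderiv 𝕜 v x).le_opENorm, (fderiv 𝕜 u x).le_opENorm]
    _ = (‖u x‖ₑ * ‖fderiv 𝕜 v x‖ₑ + ‖fderiv 𝕜 u x‖ₑ * ‖v x‖ₑ) * ‖w‖ₑ := by ring

section Hardy

variable {E : Type*} [NormedAddCommGroup E] [NormedSpace ℝ E] [FiniteDimensional ℝ E]
  [MeasurableSpace E] [BorelSpace E] (μ : Measure E) [μ.IsAddHaarMeasure]
  {G : Type*} [NormedAddCommGroup G] [NormedSpace ℝ G]

theorem finrank_sub_one_mul_lintegral_enorm_div_enorm_le {F : E → G} (hF : ContDiff ℝ 1 F)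
    (hFi : Integrable F μ) :
    (finrank ℝ E - 1 : ℕ) * ∫⁻ x, ‖F x‖ₑ / ‖x‖ₑ ∂μ ≤ ∫⁻ x, ‖fderiv ℝ F x‖ₑ ∂μ := by
  rcases Nat.eq_zero_or_pos (finrank ℝ E - 1) with hn | hn
  · simp [hn]
  have : Nontrivial E := Module.nontrivial_of_finrank_pos (R := ℝ) (by omega)
  have hmeas : Measurable fun x ↦ ‖F x‖ₑ / ‖x‖ₑ :=
    hF.continuous.enorm.measurable.div (by fun_prop)
  rw [lintegral_eq_lintegral_toSphere_lintegral_Ioi μ hmeas,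
    lintegral_eq_lintegral_toSphere_lintegral_Ioi μ
      (hF.continuous_fderiv one_ne_zero).enorm.measurable,
    ← lintegral_const_mul' _ _ (ENNReal.natCast_ne_top _)]
  refine lintegral_mono_ae ?_
  filter_upwards [ae_integrableOn_Ioi_one_comp_smul μ hF.continuous hFi] with ω hω
  exact natCast_mul_lintegral_Ioi_enorm_div_enorm_le_of_norm_eq_one hF (norm_eq_of_mem_sphere ω)
    hω hn

theorem finrank_sub_one_mul_lintegral_enorm_div_enorm_sub_le {F : E → G} (hF : ContDiff ℝ 1 F)
    (hFi : Integrable F μ) (x : E) :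
    (finrank ℝ E - 1 : ℕ) * ∫⁻ y, ‖F y‖ₑ / ‖x - y‖ₑ ∂μ ≤ ∫⁻ y, ‖fderiv ℝ F y‖ₑ ∂μ := by
  have hshift := finrank_sub_one_mul_lintegral_enorm_div_enorm_le μ (F := fun z ↦ F (x + z))
    (hF.comp (by fun_prop)) (hFi.comp_add_left x)
  simp only [fderiv_comp_add_left] at hshift
  rw [lintegral_add_left_eq_self (fun y ↦ ‖fderiv ℝ F y‖ₑ)] at hshift
  rw [← lintegral_add_left_eq_self _ x]
  simpa [enorm_neg] using hshift

variable {𝕜 : Type*} [NormedField 𝕜] [NormedAlgebra ℝ 𝕜] [NormedSpace 𝕜 G] [IsScalarTower ℝ 𝕜 G]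
  {u : E → 𝕜} {v : E → G}

theorem finrank_sub_one_mul_lintegral_enorm_mul_enorm_div_enorm_sub_le
    (hu : ContDiff ℝ 1 u) (hv : ContDiff ℝ 1 v) (hu2 : MemLp u 2 μ) (hv2 : MemLp v 2 μ) (x : E) :
    (finrank ℝ E - 1 : ℕ) * ∫⁻ y, ‖u y‖ₑ * ‖v y‖ₑ / ‖x - y‖ₑ ∂μ ≤
      eLpNorm u 2 μ * eLpNorm (fderiv ℝ v) 2 μ + eLpNorm (fderiv ℝ u) 2 μ * eLpNorm v 2 μ := by
  have hu' := hu.continuous_fderiv one_ne_zero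
  have hv' := hv.continuous_fderiv one_ne_zero
  calc (finrank ℝ E - 1 : ℕ) * ∫⁻ y, ‖u y‖ₑ * ‖v y‖ₑ / ‖x - y‖ₑ ∂μ
    _ = (finrank ℝ E - 1 : ℕ) * ∫⁻ y, ‖(u • v) y‖ₑ / ‖x - y‖ₑ ∂μ := by
        simp only [Pi.smul_apply', enorm_smul]
    _ ≤ ∫⁻ y, ‖fderiv ℝ (u • v) y‖ₑ ∂μ :=
        finrank_sub_one_mul_lintegral_enorm_div_enorm_sub_le μ (hu.smul hv)
          (memLp_one_iff_integrable.1 (hv2.smul hu2)) x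
    _ ≤ ∫⁻ y, ‖u y‖ₑ * ‖fderiv ℝ v y‖ₑ + ‖fderiv ℝ u y‖ₑ * ‖v y‖ₑ ∂μ :=
        lintegral_mono fun y ↦ enorm_fderiv_smul_le (hu.differentiable one_ne_zero y)
          (hv.differentiable one_ne_zero y)
    _ = (∫⁻ y, ‖u y‖ₑ * ‖fderiv ℝ v y‖ₑ ∂μ) + ∫⁻ y, ‖fderiv ℝ u y‖ₑ * ‖v y‖ₑ ∂μ :=
        lintegral_add_left (hu.continuous.enorm.measurable.mul hv'.enorm.measurable) _
    _ ≤ _ := by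
        gcongr
        · exact lintegral_enorm_mul_enorm_le_eLpNorm_mul_eLpNorm hu2.1 hv'.aestronglyMeasurable
        · exact lintegral_enorm_mul_enorm_le_eLpNorm_mul_eLpNorm hu'.aestronglyMeasurable hv2.1

theorem lintegral_enorm_mul_enorm_div_enorm_sub_le_of_finrank_eq_two (hE : finrank ℝ E = 2)
    (hu : ContDiff ℝ 1 u) (hv : ContDiff ℝ 1 v) (hu2 : MemLp u 2 μ) (hv2 : MemLp v 2 μ) (x : E) :
    ∫⁻ y, ‖u y‖ₑ * ‖v y‖ₑ / ‖x - y‖ₑ ∂μ ≤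
      eLpNorm u 2 μ * eLpNorm (fderiv ℝ v) 2 μ + eLpNorm (fderiv ℝ u) 2 μ * eLpNorm v 2 μ := by
  simpa [hE] using
    finrank_sub_one_mul_lintegral_enorm_mul_enorm_div_enorm_sub_le μ hu hv hu2 hv2 x

end Hardy

section SobolevNorms

theorem eLpNorm_le_H1 (u : E2 → ℂ) : eLpNorm u 2 volume ≤ H1 u := by
  rw [H1, one_div, ENNReal.le_rpow_inv_iff two_pos, ENNReal.rpow_ofNat]
  exact le_self_add

theorem eLpNorm_fderiv_le_H1 (u : E2 → ℂ) : eLpNorm (fderiv ℝ u) 2 volume ≤ H1 u := by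
  rw [H1, one_div, ENNReal.le_rpow_inv_iff two_pos, ENNReal.rpow_ofNat]
  exact le_add_self

theorem H1_le_H2 (u : E2 → ℂ) : H1 u ≤ H2 u :=
  ENNReal.rpow_le_rpow le_self_add (by norm_num)

theorem eLpNorm_fderiv_fderiv_le_H2 (u : E2 → ℂ) :
    eLpNorm (fderiv ℝ (fderiv ℝ u)) 2 volume ≤ H2 u := by
  rw [H2, one_div, ENNReal.le_rpow_inv_iff two_pos, ENNReal.rpow_ofNat]
  exact le_add_self

end SobolevNorms

section Kernel

theorem norm_perp (x : E2) : ‖perp x‖ = ‖x‖ := by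
  simp [perp, EuclideanSpace.norm_eq, Fin.sum_univ_two, add_comm]

theorem enorm_K_le (R : ℝ) (x : E2) : ‖K R x‖ₑ ≤ ‖x‖ₑ⁻¹ := by
  rcases eq_or_ne x 0 with rfl | hx
  · simp
  have hx' : 0 < ‖x‖ := norm_pos_iff.2 hx
  have hnorm : ‖K R x‖ ≤ ‖x‖⁻¹ := by
    calc ‖K R x‖ = ((max R ‖x‖) ^ 2)⁻¹ * ‖x‖ := by
          rw [K, norm_smul, norm_perp, Real.norm_of_nonneg (by positivity)]
      _ ≤ (‖x‖ ^ 2)⁻¹ * ‖x‖ := by gcongr; exact le_max_right _ _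
      _ = ‖x‖⁻¹ := by field_simp
  rw [← ofReal_norm, ← ofReal_norm, ← ENNReal.ofReal_inv_of_pos hx']
  exact ENNReal.ofReal_le_ofReal hnorm

theorem inner_Jf (u : E2 → ℂ) (v x : E2) :
    ⟪v, Jf u x⟫ = 2 * ((starRingEnd ℂ) (u x) * fderiv ℝ u x v).im := by
  have hv : v = v 0 • e2 0 + v 1 • e2 1 := by
    ext i
    fin_cases i <;> simp [e2]
  have hfderiv : fderiv ℝ u x v = v 0 • fderiv ℝ u x (e2 0) + v 1 • fderiv ℝ u x (e2 1) := by
    conv_lhs => rw [hv, map_add, map_smul, map_smul]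
  simp only [hfderiv, Jf, WithLp.equiv_symm_apply, PiLp.inner_apply, RCLike.inner_apply,
    Real.ringHom_apply, Fin.sum_univ_two, Complex.real_smul, Complex.mul_im, Complex.add_im,
    Complex.add_re, Complex.mul_re, Complex.ofReal_re, Complex.ofReal_im]
  ring

theorem enorm_inner_Jf_le (u : E2 → ℂ) (v x : E2) :
    ‖⟪v, Jf u x⟫‖ₑ ≤ 2 * (‖u x‖ₑ * ‖fderiv ℝ u x‖ₑ * ‖v‖ₑ) := by
  calc ‖⟪v, Jf u x⟫‖ₑ
    _ = 2 * ‖((starRingEnd ℂ) (u x) * fderiv ℝ u x v).im‖ₑ := by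
        rw [inner_Jf, enorm_mul, Real.enorm_eq_ofReal zero_le_two, ENNReal.ofReal_ofNat]
    _ ≤ 2 * ‖(starRingEnd ℂ) (u x) * fderiv ℝ u x v‖ₑ := by
        gcongr
        exact enorm_le_iff_norm_le.2 (Complex.abs_im_le_norm _)
    _ = 2 * (‖u x‖ₑ * ‖fderiv ℝ u x v‖ₑ) := by rw [enorm_mul, RCLike.enorm_conj]
    _ ≤ 2 * (‖u x‖ₑ * ‖fderiv ℝ u x‖ₑ * ‖v‖ₑ) := by
        grw [(fderiv ℝ u x).le_opENorm v, mul_assoc]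

theorem enorm_convKs_norm_sq_le (R : ℝ) {u : E2 → ℂ} (hu : ContDiff ℝ 1 u) (hu2 : MemLp u 2)
    (x : E2) : ‖convKs R (fun y ↦ ‖u y‖ ^ 2) x‖ₑ ≤ 2 * H1 u ^ 2 := by
  calc ‖convKs R (fun y ↦ ‖u y‖ ^ 2) x‖ₑ
    _ ≤ ∫⁻ y, ‖‖u y‖ ^ 2 • K R (x - y)‖ₑ := enorm_integral_le_lintegral_enorm _
    _ ≤ ∫⁻ y, ‖u y‖ₑ * ‖u y‖ₑ / ‖x - y‖ₑ := lintegral_mono fun y ↦ by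
        rw [enorm_smul, enorm_pow, enorm_norm, sq, div_eq_mul_inv]
        grw [enorm_K_le]
    _ ≤ eLpNorm u 2 volume * eLpNorm (fderiv ℝ u) 2 volume +
          eLpNorm (fderiv ℝ u) 2 volume * eLpNorm u 2 volume :=
        lintegral_enorm_mul_enorm_div_enorm_sub_le_of_finrank_eq_two volume
          finrank_euclideanSpace_fin hu hu hu2 hu2 x
    _ ≤ H1 u * H1 u + H1 u * H1 u := by grw [eLpNorm_le_H1, eLpNorm_fderiv_le_H1]
    _ = 2 * H1 u ^ 2 := by ring

theorem enorm_convKv_Jf_le (R : ℝ) {u : E2 → ℂ} (hu : ContDiff ℝ 2 u) (hu2 : MemLp u 2)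
    (hu2' : MemLp (fderiv ℝ u) 2) (x : E2) :
    ‖convKv R (Jf u) x‖ₑ ≤ 2 * (H1 u * H2 u + H1 u ^ 2) := by
  calc ‖convKv R (Jf u) x‖ₑ
    _ ≤ ∫⁻ y, ‖⟪K R (x - y), Jf u y⟫‖ₑ := enorm_integral_le_lintegral_enorm _
    _ ≤ ∫⁻ y, 2 * (‖u y‖ₑ * ‖fderiv ℝ u y‖ₑ / ‖x - y‖ₑ) := lintegral_mono fun y ↦ by
        grw [enorm_inner_Jf_le, enorm_K_le, div_eq_mul_inv]
    _ = 2 * ∫⁻ y, ‖u y‖ₑ * ‖fderiv ℝ u y‖ₑ / ‖x - y‖ₑ := lintegral_const_mul' _ _ ofNat_ne_top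
    _ ≤ 2 * (eLpNorm u 2 * eLpNorm (fderiv ℝ (fderiv ℝ u)) 2 +
          eLpNorm (fderiv ℝ u) 2 * eLpNorm (fderiv ℝ u) 2) := by
        gcongr
        exact lintegral_enorm_mul_enorm_div_enorm_sub_le_of_finrank_eq_two volume
          finrank_euclideanSpace_fin (hu.of_le one_le_two) (hu.fderiv_right le_rfl) hu2 hu2' x
    _ ≤ 2 * (H1 u * H2 u + H1 u ^ 2) := by
        grw [eLpNorm_le_H1, eLpNorm_fderiv_fderiv_le_H2, eLpNorm_fderiv_le_H1, sq]

end Kernel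

section MixedTwoBody

/-- The mean-field mixed two-body operator `v'` applied to `u`, the function whose `L²` norm
(2.23) bounds. -/
def mixedTwoBody (R : ℝ) (u : E2 → ℂ) (x : E2) : ℂ :=
  -2 * Complex.I * fderiv ℝ u x (convKs R (fun y ↦ ‖u y‖ ^ 2) x) - (convKv R (Jf u) x : ℂ) * u x

theorem enorm_mixedTwoBody_le (R : ℝ) {u : E2 → ℂ} (hu : ContDiff ℝ 2 u) (hu2 : MemLp u 2)
    (hu2' : MemLp (fderiv ℝ u) 2) (x : E2) :
    ‖mixedTwoBody R u x‖ₑ ≤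
      4 * H1 u ^ 2 * ‖fderiv ℝ u x‖ₑ + 2 * (H1 u * H2 u + H1 u ^ 2) * ‖u x‖ₑ := by
  calc ‖mixedTwoBody R u x‖ₑ
    _ ≤ ‖-2 * Complex.I * fderiv ℝ u x (convKs R (fun y ↦ ‖u y‖ ^ 2) x)‖ₑ +
          ‖(convKv R (Jf u) x : ℂ) * u x‖ₑ := enorm_sub_le
    _ = 2 * ‖fderiv ℝ u x (convKs R (fun y ↦ ‖u y‖ ^ 2) x)‖ₑ +
          ‖convKv R (Jf u) x‖ₑ * ‖u x‖ₑ := by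
        simp [enorm_eq_nnnorm]
    _ ≤ 2 * (‖fderiv ℝ u x‖ₑ * (2 * H1 u ^ 2)) +
          2 * (H1 u * H2 u + H1 u ^ 2) * ‖u x‖ₑ := by
        grw [(fderiv ℝ u x).le_opENorm, enorm_convKs_norm_sq_le R (hu.of_le one_le_two) hu2,
          enorm_convKv_Jf_le R hu hu2 hu2']
    _ = 4 * H1 u ^ 2 * ‖fderiv ℝ u x‖ₑ + 2 * (H1 u * H2 u + H1 u ^ 2) * ‖u x‖ₑ := by ring

theorem eLpNorm_mixedTwoBody_le (R : ℝ) {u : E2 → ℂ} (hu : ContDiff ℝ 2 u) (hu_lt_top : H2 u < ⊤) :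
    eLpNorm (mixedTwoBody R u) 2 volume ≤ 6 * H1 u ^ 3 + 2 * (H2 u * H1 u ^ 2) := by
  have hH1 : H1 u < ⊤ := (H1_le_H2 u).trans_lt hu_lt_top
  have hu2 : MemLp u 2 := ⟨hu.continuous.aestronglyMeasurable, (eLpNorm_le_H1 u).trans_lt hH1⟩
  have hu2' : MemLp (fderiv ℝ u) 2 :=
    ⟨(hu.continuous_fderiv two_ne_zero).aestronglyMeasurable,
      (eLpNorm_fderiv_le_H1 u).trans_lt hH1⟩
  calc eLpNorm (mixedTwoBody R u) 2 volume
    _ ≤ 4 * H1 u ^ 2 * eLpNorm (fderiv ℝ u) 2 volume +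
          2 * (H1 u * H2 u + H1 u ^ 2) * eLpNorm u 2 volume :=
        eLpNorm_le_mul_add_mul_of_enorm_le one_le_two hu2'.1 hu2.1
          (enorm_mixedTwoBody_le R hu hu2 hu2')
    _ ≤ 4 * H1 u ^ 2 * H1 u + 2 * (H1 u * H2 u + H1 u ^ 2) * H1 u := by
        grw [eLpNorm_fderiv_le_H1, eLpNorm_le_H1]
    _ = 6 * H1 u ^ 3 + 2 * (H2 u * H1 u ^ 2) := by ring

end MixedTwoBody

/-- Estimate (2.23): there is `C > 0` such that for every `R ≥ 0` and every
`φ ∈ H²(ℝ², ℂ)`, the function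
`v'φ = −2i (K_R ∗ |φ|²)·∇φ − (K_R ∗ J[φ]) φ` satisfies
`‖v'φ‖₂ ≤ C (‖φ‖_{H¹}³ + ‖φ‖_{H²} ‖φ‖_{H¹}²)`. -/
theorem statement9 :
    ∃ C : ℝ, 0 < C ∧ ∀ R : ℝ, 0 ≤ R →
      ∀ φ : E2 → ℂ, ContDiff ℝ 2 φ → H2 φ < ⊤ →
        eLpNorm
            (fun x =>
              -2 * Complex.I * fderiv ℝ φ x (convKs R (fun y => ‖φ y‖ ^ 2) x)
                - (↑(convKv R (Jf φ) x) : ℂ) * φ x)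
            2 volume
          ≤ ENNReal.ofReal C * (H1 φ ^ 3 + H2 φ * H1 φ ^ 2) := by
  refine ⟨6, by norm_num, fun R _ φ hφ hφ_lt_top ↦ ?_⟩
  calc eLpNorm (mixedTwoBody R φ) 2 volume
    _ ≤ 6 * H1 φ ^ 3 + 2 * (H2 φ * H1 φ ^ 2) := eLpNorm_mixedTwoBody_le R hφ hφ_lt_top
    _ ≤ 6 * H1 φ ^ 3 + 6 * (H2 φ * H1 φ ^ 2) := by gcongr; norm_num
    _ = ENNReal.ofReal 6 * (H1 φ ^ 3 + H2 φ * H1 φ ^ 2) := by rw [ENNReal.ofReal_ofNat, mul_add]
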